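/- Let p be a prime and ℓ ≥ 1; work in Z_{p^ℓ}. Let k > ℓ and 0 ≤ m ≤ k−ℓ−1, and let s = ⌊b_k ⋯ b_{k−m} (p−1) ⋯ (p−1) b_{k−m−ℓ−1} ⋯ b_0⌋_p with b_k ≠ 0, where the digits in positions k−m−1 down to k−m−ℓ are all equal to p−1 (ℓ consecutive digits). Let s' = ⌊b_k ⋯ b_{k−m} (p−1) ⋯ (p−1) b_{k−m−ℓ−1} ⋯ b_0⌋_p be obtained from s by deleting the digit in position k−m−ℓ (so only ℓ−1 consecutive digits p−1 remain). Then bin_s ≡_ν Alt(bin_{s'}, p^{k−m−ℓ}); in particular Π_i(bin_s) = Π_i(bin_{s'}) for every 0 ≤ i < ℓ, and Z(bin_s) = Z(bin_{s'}) + (p−1)p^{k+ℓ−1}. -/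

import Mathlib

/-- The shift operator `θ`: `θ f n = f (n+1)`. -/
def shiftSeq {M : ℕ} (f : ℕ → ZMod M) : ℕ → ZMod M := fun n => f (n + 1)

/-- The difference operator `Δ = θ - id`: `Δ f n = f (n+1) - f n`. -/
def deltaSeq {M : ℕ} (f : ℕ → ZMod M) : ℕ → ZMod M := fun n => f (n + 1) - f n

/-- A sequence is periodic if `θ^j f = f` for some `j ≥ 1`. -/
def IsPeriodicSeq {M : ℕ} (f : ℕ → ZMod M) : Prop := ∃ j, 1 ≤ j ∧ Function.Periodic f j

/-- The period `τ(f)`: the least `j ≥ 1` with `θ^j f = f`. -/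
noncomputable def perSeq {M : ℕ} (f : ℕ → ZMod M) : ℕ :=
  sInf {j | 1 ≤ j ∧ Function.Periodic f j}

/-- The trace `tr f = ∑_{i=0}^{τ(f)-1} f i`. -/
noncomputable def trSeq {M : ℕ} (f : ℕ → ZMod M) : ZMod M :=
  ∑ i ∈ Finset.range (perSeq f), f i

/-- The sum operator `Σ`: `Σf(0) = 0`, `Σf(n) = f(n-1) + Σf(n-1)`. -/
def sigmaSeq {M : ℕ} (f : ℕ → ZMod M) : ℕ → ZMod M
  | 0 => 0
  | n + 1 => f n + sigmaSeq f n

/-- A sequence is nilpotent if `Δ^η f = 0` for some `η ≥ 1`. -/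
def IsNilpotentSeq {M : ℕ} (f : ℕ → ZMod M) : Prop := ∃ η, 1 ≤ η ∧ deltaSeq^[η] f = 0

/-- A sequence is idempotent if `Δ^η f = f` for some `η ≥ 1`. -/
def IsIdempotentSeq {M : ℕ} (f : ℕ → ZMod M) : Prop := ∃ η, 1 ≤ η ∧ deltaSeq^[η] f = f

/-- The nilpotency index: the least `η ≥ 1` with `Δ^η f = 0`. -/
noncomputable def nilIndex {M : ℕ} (f : ℕ → ZMod M) : ℕ :=
  sInf {η | 1 ≤ η ∧ deltaSeq^[η] f = 0}

/-- The idempotency index: the least `η ≥ 1` with `Δ^η f = f`. -/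
noncomputable def idemIndex {M : ℕ} (f : ℕ → ZMod M) : ℕ :=
  sInf {η | 1 ≤ η ∧ deltaSeq^[η] f = f}

/-- The `p`-adic valuation on `ZMod M`, with `ν(0) = ∞`. -/
noncomputable def nuVal (p : ℕ) {M : ℕ} (a : ZMod M) : ℕ∞ :=
  if a = 0 then ⊤ else (padicValNat p a.val : ℕ∞)

/-- `Double(f, q^t)`: repeat `q` times each successive `q^t`-subsequence of `f`. -/
def DoubleSeq {M : ℕ} (f : ℕ → ZMod M) (q t : ℕ) : ℕ → ZMod M :=
  fun n => f ((n / q ^ (t + 1)) * q ^ t + n % q ^ t)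

/-- `Alt(f, q^t)`: alternate `(q-1)q^t` zeros with the successive `q^t`-subsequences of `f`. -/
def AltSeq {M : ℕ} (f : ℕ → ZMod M) (q t : ℕ) : ℕ → ZMod M :=
  fun n => if (n / q ^ t) % q = q - 1 then f ((n / q ^ (t + 1)) * q ^ t + n % q ^ t) else 0

/-- The binomial sequence `bin_s(n) = C(n,s) mod p^ℓ`. -/
def binSeq (p l : ℕ) (s : ℕ) : ℕ → ZMod (p ^ l) := fun n => (n.choose s : ZMod (p ^ l))

/-- `f ≡_ν g`: zeros coincide, and valuations of nonzero values coincide. -/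
def nuEquiv (p : ℕ) {M : ℕ} (f g : ℕ → ZMod M) : Prop :=
  ∀ n, (f n = 0 ↔ g n = 0) ∧ (f n ≠ 0 → padicValNat p (f n).val = padicValNat p (g n).val)

/-- `Π_i(f)`: number of entries of valuation `i` in one period of `f`. -/
noncomputable def PiCount (p : ℕ) {M : ℕ} (i : ℕ) (f : ℕ → ZMod M) : ℕ :=
  ((Finset.range (perSeq f)).filter fun x => f x ≠ 0 ∧ padicValNat p (f x).val = i).card

/-- `Z(f)`: number of zero entries in one period of `f`. -/
noncomputable def ZCount {M : ℕ} (f : ℕ → ZMod M) : ℕ :=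
  ((Finset.range (perSeq f)).filter fun x => f x = 0).card

/-- The `j`-th base-`p` digit of `x`. -/
def dig (p x j : ℕ) : ℕ := x / p ^ j % p

/-!
By Kummer's theorem, the exponent of `p` in `C(n, s)` is the number of positions `i` such that the
base-`p` subtraction `n - s` borrows across position `i`, that is `n % p ^ i < s % p ^ i`. A borrow
that reaches a run of digits `p - 1` of `s` is propagated through the whole run, since no digit of
`n` can absorb it.

Let the digits of `s` in positions `t, …, t + ℓ - 1` be `p - 1`. If digit `t` of `n` is not `p - 1`,
it creates a borrow that runs through all `ℓ` positions, so `C(n, s)` vanishes modulo `p ^ ℓ`.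
Otherwise, deleting digit `t` from both `n` and `s` deletes position `t` from the set of borrows.
This does not change its cardinality unless `t` was itself a borrow, and in that case at least `ℓ`
borrows survive and both binomial coefficients vanish modulo `p ^ ℓ`.

For the counts, the period of `bin_s` is `p` times that of `bin_{s'}`, exactly the factor by which
`Alt` stretches a sequence, and the zeros inserted by `Alt` account for the extra zeros.
-/

section Periods

variable {M : ℕ} {f : ℕ → ZMod M}

theorem iterate_shiftSeq (j : ℕ) (f : ℕ → ZMod M) : shiftSeq^[j] f = fun n => f (n + j) := by
  induction j generalizing f with
  | zero => rfl
  | succ j ih =>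
    rw [Function.iterate_succ_apply, ih]
    funext n
    exact congrArg f (add_assoc n j 1)

theorem isPeriodicPt_shiftSeq_iff {j : ℕ} :
    Function.IsPeriodicPt shiftSeq j f ↔ Function.Periodic f j := by
  rw [Function.IsPeriodicPt, Function.IsFixedPt, iterate_shiftSeq, funext_iff, Function.Periodic]

theorem perSeq_eq_minimalPeriod (hf : IsPeriodicSeq f) :
    perSeq f = Function.minimalPeriod shiftSeq f := by
  obtain ⟨hpos, hper⟩ : 1 ≤ perSeq f ∧ Function.Periodic f (perSeq f) := Nat.sInf_mem hf
  have hpt : Function.IsPeriodicPt shiftSeq (perSeq f) f := isPeriodicPt_shiftSeq_iff.2 hper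
  exact le_antisymm
    (Nat.sInf_le ⟨hpt.minimalPeriod_pos hpos,
      isPeriodicPt_shiftSeq_iff.1 (Function.isPeriodicPt_minimalPeriod _ _)⟩)
    (hpt.minimalPeriod_le hpos)

theorem periodic_deltaSeq {c : ℕ} (h : Function.Periodic f c) :
    Function.Periodic (deltaSeq f) c := fun n => by
  rw [deltaSeq, deltaSeq, h n, add_right_comm, h (n + 1)]

end Periods

section Borrows

/-- The positions across which the base-`p` subtraction `n - s` borrows: position `i` is one of
them when the number formed by the `i` lowest digits of `n` is smaller than that of `s`. For
`n < s` the borrow never stops and the set is infinite. -/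
def borrows (p n s : ℕ) : Set ℕ := {i | n % p ^ i < s % p ^ i}

variable {p n s i j : ℕ}

theorem mem_borrows : i ∈ borrows p n s ↔ n % p ^ i < s % p ^ i := Iff.rfl

theorem mem_borrows_of_lt (hp : 1 < p) (hns : n < s) (hi : s ≤ i) : i ∈ borrows p n s := by
  have hs : s < p ^ i := hi.trans_lt (Nat.lt_pow_self hp)
  rwa [mem_borrows, Nat.mod_eq_of_lt (hns.trans hs), Nat.mod_eq_of_lt hs]

theorem add_mod_lt_iff {q a b : ℕ} (hq : 0 < q) :
    (a + b) % q < a % q ↔ q ≤ a % q + b % q := by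
  have ha := Nat.mod_lt a hq
  have hb := Nat.mod_lt b hq
  rw [Nat.add_mod]
  rcases lt_or_ge (a % q + b % q) q with h | h
  · rw [Nat.mod_eq_of_lt h]
    omega
  · rw [Nat.mod_eq_sub_mod h, Nat.mod_eq_of_lt (by omega)]
    omega

theorem borrows_eq_coe_filter_Ico (hp : 1 < p) (hsn : s ≤ n) :
    borrows p n s = {i ∈ Finset.Ico 1 (n + 1) | p ^ i ≤ s % p ^ i + (n - s) % p ^ i} := by
  ext i
  have hcarry := add_mod_lt_iff (a := s) (b := n - s) (pow_pos (zero_lt_one.trans hp) i)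
  rw [Nat.add_sub_cancel' hsn] at hcarry
  simp only [Finset.coe_filter, Finset.mem_Ico, Set.mem_ofPred_eq, ← hcarry, mem_borrows,
    iff_and_self]
  intro hi
  constructor
  · by_contra! h0
    obtain rfl : i = 0 := Nat.lt_one_iff.1 h0
    simp only [pow_zero, Nat.mod_one, lt_self_iff_false] at hi
  · by_contra! hni
    have hn : n < p ^ i := (Nat.lt_of_succ_le hni).trans (Nat.lt_pow_self hp)
    rw [Nat.mod_eq_of_lt hn, Nat.mod_eq_of_lt (hsn.trans_lt hn)] at hi
    exact hi.not_ge hsn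

theorem emultiplicity_choose_eq_encard_borrows (hp : p.Prime) (n s : ℕ) :
    emultiplicity p (n.choose s) = (borrows p n s).encard := by
  rcases le_or_gt s n with hsn | hns
  · rw [borrows_eq_coe_filter_Ico hp.one_lt hsn, Set.encard_coe_eq_coe_finsetCard,
      hp.emultiplicity_choose hsn (Nat.lt_succ_of_le (Nat.log_le_self p n))]
  · have hinf : (borrows p n s).Infinite :=
      (Set.Ici_infinite s).mono fun _ hi => mem_borrows_of_lt hp.one_lt hns hi
    rw [Nat.choose_eq_zero_of_lt hns, emultiplicity_zero, hinf.encard_eq]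

theorem pow_card_dvd_choose (hp : p.Prime) {I : Finset ℕ} (hI : ↑I ⊆ borrows p n s) :
    p ^ I.card ∣ n.choose s := by
  rw [pow_dvd_iff_le_emultiplicity, emultiplicity_choose_eq_encard_borrows hp,
    ← Set.encard_coe_eq_coe_finsetCard]
  exact Set.encard_le_encard hI

theorem add_mul_lt_add_mul_iff {q a b u v : ℕ} (ha : a < q) (hb : b < q) :
    a + q * u < b + q * v ↔ u < v ∨ u = v ∧ a < b := by
  rcases lt_trichotomy u v with h | rfl | h
  · have := Nat.mul_le_mul_left q (Nat.succ_le_of_lt h)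
    rw [Nat.mul_succ] at this
    omega
  · simp only [add_lt_add_iff_right, lt_self_iff_false, true_and, false_or]
  · have := Nat.mul_le_mul_left q (Nat.succ_le_of_lt h)
    rw [Nat.mul_succ] at this
    omega

theorem succ_mem_borrows_iff (hp : 0 < p) :
    i + 1 ∈ borrows p n s ↔ dig p n i < dig p s i ∨ dig p n i = dig p s i ∧ i ∈ borrows p n s := by
  have hpi : 0 < p ^ i := pow_pos hp i
  rw [mem_borrows, Nat.mod_pow_succ, Nat.mod_pow_succ,
    add_mul_lt_add_mul_iff (Nat.mod_lt n hpi) (Nat.mod_lt s hpi)]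
  rfl

theorem dig_le_pred (hp : 0 < p) (x j : ℕ) : dig p x j ≤ p - 1 :=
  Nat.le_pred_of_lt (Nat.mod_lt _ hp)

theorem Icc_subset_borrows (hp : 0 < p) (hi : i ∈ borrows p n s)
    (hs : ∀ m ∈ Set.Ico i j, dig p s m = p - 1) : Set.Icc i j ⊆ borrows p n s := by
  rintro m ⟨him, hmj⟩
  induction m, him using Nat.le_induction with
  | base => exact hi
  | succ m him ih =>
    rw [succ_mem_borrows_iff hp, hs m ⟨him, hmj⟩]
    exact (dig_le_pred hp n m).lt_or_eq.imp_right fun h => ⟨h, ih (Nat.le_of_succ_le hmj)⟩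

end Borrows

section DigitDeletion

/-- The number obtained from `x` by deleting its base-`q` digit in position `t`. -/
def deleteDigit (q t x : ℕ) : ℕ := x / q ^ (t + 1) * q ^ t + x % q ^ t

/-- The number obtained from `y` by inserting the base-`q` digit `d` in position `t`, so that the
digits of `y` in positions `≥ t` move up by one. -/
def insertDigit (q t d y : ℕ) : ℕ := (y / q ^ t * q + d) * q ^ t + y % q ^ t

variable {q t : ℕ}

theorem deleteDigit_div_pow (hq : 0 < q) {j : ℕ} (hj : t ≤ j) (x : ℕ) :
    deleteDigit q t x / q ^ j = x / q ^ (j + 1) := by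
  obtain ⟨a, rfl⟩ := Nat.exists_eq_add_of_le hj
  have hqt : 0 < q ^ t := pow_pos hq t
  rw [add_right_comm, pow_add, pow_add q (t + 1), ← Nat.div_div_eq_div_mul,
    ← Nat.div_div_eq_div_mul, deleteDigit, add_comm, Nat.add_mul_div_right _ _ hqt,
    Nat.div_eq_of_lt (Nat.mod_lt x hqt), zero_add]

theorem deleteDigit_mod_pow {i : ℕ} (hi : i ≤ t) (x : ℕ) :
    deleteDigit q t x % q ^ i = x % q ^ i := by
  have hdvd : q ^ i ∣ q ^ t := pow_dvd_pow q hi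
  rw [← Nat.mod_mod_of_dvd _ hdvd, deleteDigit, Nat.mul_add_mod', Nat.mod_mod,
    Nat.mod_mod_of_dvd _ hdvd]

theorem dig_deleteDigit (hq : 0 < q) {j : ℕ} (hj : t ≤ j) (x : ℕ) :
    dig q (deleteDigit q t x) j = dig q x (j + 1) := by
  rw [dig, dig, deleteDigit_div_pow hq hj]

theorem deleteDigit_lt_pow_iff (hq : 0 < q) {N : ℕ} (ht : t ≤ N) {x : ℕ} :
    deleteDigit q t x < q ^ N ↔ x < q ^ (N + 1) := by
  rw [← Nat.div_eq_zero_iff_lt (pow_pos hq N), deleteDigit_div_pow hq ht,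
    Nat.div_eq_zero_iff_lt (pow_pos hq (N + 1))]

theorem insertDigit_div_pow {d : ℕ} (hq : 0 < q) (y : ℕ) :
    insertDigit q t d y / q ^ t = y / q ^ t * q + d := by
  have hqt : 0 < q ^ t := pow_pos hq t
  rw [insertDigit, add_comm, Nat.add_mul_div_right _ _ hqt,
    Nat.div_eq_of_lt (Nat.mod_lt y hqt), zero_add]

theorem dig_insertDigit {d : ℕ} (hd : d < q) (y : ℕ) : dig q (insertDigit q t d y) t = d := by
  rw [dig, insertDigit_div_pow (Nat.zero_lt_of_lt hd), Nat.mul_add_mod', Nat.mod_eq_of_lt hd]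

theorem deleteDigit_insertDigit {d : ℕ} (hd : d < q) (y : ℕ) :
    deleteDigit q t (insertDigit q t d y) = y := by
  have hq : 0 < q := Nat.zero_lt_of_lt hd
  have hdiv : insertDigit q t d y / q ^ (t + 1) = y / q ^ t := by
    rw [pow_succ, ← Nat.div_div_eq_div_mul, insertDigit_div_pow hq, add_comm,
      Nat.add_mul_div_right _ _ hq, Nat.div_eq_of_lt hd, zero_add]
  have hmod : insertDigit q t d y % q ^ t = y % q ^ t := by
    rw [insertDigit, Nat.mul_add_mod', Nat.mod_mod]
  rw [deleteDigit, hdiv, hmod, Nat.div_add_mod']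

theorem insertDigit_dig_deleteDigit (hq : 0 < q) (x : ℕ) :
    insertDigit q t (dig q x t) (deleteDigit q t x) = x := by
  rw [insertDigit, deleteDigit_div_pow hq le_rfl, deleteDigit_mod_pow le_rfl, dig, pow_succ,
    ← Nat.div_div_eq_div_mul, Nat.div_add_mod', Nat.div_add_mod']

theorem borrows_deleteDigit (hq : 0 < q) {n s : ℕ} (hns : dig q n t = dig q s t) :
    borrows q (deleteDigit q t n) (deleteDigit q t s) =
      (fun i => if i < t then i else i + 1) ⁻¹' borrows q n s := by
  ext i
  rw [Set.mem_preimage]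
  split_ifs with hi
  · simp only [mem_borrows, deleteDigit_mod_pow hi.le]
  · induction i, not_lt.1 hi using Nat.le_induction with
    | base =>
      simp only [succ_mem_borrows_iff hq, hns, lt_self_iff_false, true_and, false_or, mem_borrows,
        deleteDigit_mod_pow le_rfl]
    | succ i hti ih =>
      rw [succ_mem_borrows_iff hq, succ_mem_borrows_iff hq (i := i + 1), ih (not_lt.2 hti),
        dig_deleteDigit hq hti, dig_deleteDigit hq hti]

end DigitDeletion

section Valuation

variable {M p l i : ℕ} {a : ZMod M} {f g : ℕ → ZMod M}

theorem nuVal_eq_top_iff : nuVal p a = ⊤ ↔ a = 0 := by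
  rw [nuVal, ite_eq_left_iff, not_imp_comm]
  exact ⟨fun h => h (ENat.natCast_ne_top _), fun h _ => h⟩

theorem nuVal_eq_natCast_iff : nuVal p a = i ↔ a ≠ 0 ∧ padicValNat p a.val = i := by
  rw [nuVal]
  split_ifs with h <;> simp [h]

theorem nuEquiv_iff_nuVal_eq : nuEquiv p f g ↔ ∀ n, nuVal p (f n) = nuVal p (g n) := by
  refine forall_congr' fun n => ?_
  by_cases hf : f n = 0 <;> by_cases hg : g n = 0 <;> simp [nuVal, hf, hg]

theorem emultiplicity_mod_pow {c : ℕ} (hc : ¬ p ^ l ∣ c) :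
    emultiplicity p (c % p ^ l) = emultiplicity p c := by
  refine emultiplicity_eq_emultiplicity_iff.2 fun i => ?_
  rcases le_total i l with hil | hli
  · exact Nat.dvd_mod_iff (pow_dvd_pow p hil)
  · refine iff_of_false (fun h => hc ?_) fun h => hc ((pow_dvd_pow p hli).trans h)
    exact (Nat.dvd_mod_iff dvd_rfl).1 ((pow_dvd_pow p hli).trans h)

theorem nuVal_natCast (hp : p.Prime) (l c : ℕ) :
    nuVal p (c : ZMod (p ^ l)) = if p ^ l ∣ c then ⊤ else emultiplicity p c := by
  have := Fact.mk hp
  simp only [nuVal, ZMod.natCast_eq_zero_iff, ZMod.val_natCast]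
  split_ifs with hc
  · rfl
  · rw [padicValNat_eq_emultiplicity fun h => hc (Nat.dvd_of_mod_eq_zero h),
      emultiplicity_mod_pow hc]

theorem nuVal_natCast_congr (hp : p.Prime) {c d : ℕ}
    (h : emultiplicity p c = emultiplicity p d) :
    nuVal p (c : ZMod (p ^ l)) = nuVal p (d : ZMod (p ^ l)) := by
  simp only [nuVal_natCast hp, pow_dvd_iff_le_emultiplicity, h]

end Valuation

section BinomialSequence

variable {p l k r s t n : ℕ}

theorem pow_dvd_choose_pow (hp : p.Prime) (hs : s ≠ 0) (hsk : s < p ^ (k + 1)) :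
    p ^ l ∣ (p ^ (l + k)).choose s := by
  have hI : ↑(Finset.Icc (k + 1) (k + l)) ⊆ borrows p (p ^ (l + k)) s := by
    intro i hi
    obtain ⟨hki, hil⟩ := Finset.mem_Icc.1 (Finset.mem_coe.1 hi)
    rw [mem_borrows, Nat.mod_eq_zero_of_dvd (pow_dvd_pow p (by omega)),
      Nat.mod_eq_of_lt (hsk.trans_le (Nat.pow_le_pow_right hp.pos hki))]
    exact Nat.pos_of_ne_zero hs
  simpa using pow_card_dvd_choose hp hI

theorem periodic_binSeq (hp : p.Prime) (hs : s < p ^ (k + 1)) :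
    Function.Periodic (binSeq p l s) (p ^ (l + k)) := fun n => by
  rw [binSeq, add_comm, Nat.add_choose_eq, Nat.cast_sum, Finset.sum_eq_single (0, s)]
  · simp only [Nat.choose_zero_right, one_mul, binSeq]
  · rintro ⟨i, j⟩ hij hne
    rw [Finset.HasAntidiagonal.mem_antidiagonal] at hij
    have hi : i ≠ 0 := fun hi => hne (Prod.ext hi (by omega))
    rw [ZMod.natCast_eq_zero_iff]
    exact (pow_dvd_choose_pow hp hi (by omega)).mul_right _
  · exact fun h => absurd (Finset.HasAntidiagonal.mem_antidiagonal.2 (zero_add s)) h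

theorem deltaSeq_binSeq_succ (p l s : ℕ) : deltaSeq (binSeq p l (s + 1)) = binSeq p l s := by
  funext n
  rw [deltaSeq, binSeq, binSeq, binSeq, Nat.choose_succ_succ, Nat.cast_add, add_sub_cancel_right]

theorem periodic_binSeq_of_le {c : ℕ} (hrs : r ≤ s) (h : Function.Periodic (binSeq p l s) c) :
    Function.Periodic (binSeq p l r) c := by
  induction s, hrs using Nat.le_induction with
  | base => exact h
  | succ s _ ih => exact ih (deltaSeq_binSeq_succ p l s ▸ periodic_deltaSeq h)

theorem not_periodic_binSeq (hp : p.Prime) (hs : p ^ k ≤ s) :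
    ¬ Function.Periodic (binSeq p (l + 1) s) (p ^ (l + k)) := by
  intro h
  have hpk : 0 < p ^ k := pow_pos hp.pos k
  have hdvd : p ^ (l + 1) ∣ (p ^ (l + k)).choose (p ^ k) := by
    have h0 := periodic_binSeq_of_le hs h 0
    rwa [binSeq, binSeq, Nat.choose_eq_zero_of_lt hpk, zero_add, Nat.cast_zero,
      ZMod.natCast_eq_zero_iff] at h0
  have hval : emultiplicity p ((p ^ (l + k)).choose (p ^ k)) = l := by
    refine ENat.add_left_injective_of_ne_top (ENat.natCast_ne_top k) ?_
    simpa [emultiplicity_pow_self_of_prime hp.prime] using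
      hp.emultiplicity_choose_prime_pow_add_emultiplicity
        (Nat.pow_le_pow_right hp.pos (Nat.le_add_left k l)) hpk.ne'
  rw [pow_dvd_iff_le_emultiplicity, hval, Nat.cast_le] at hdvd
  omega

theorem perSeq_binSeq (hp : p.Prime) (hl : l ≠ 0) (hs : p ^ k ≤ s) (hs' : s < p ^ (k + 1)) :
    perSeq (binSeq p l s) = p ^ (l + k) := by
  obtain ⟨l, rfl⟩ := Nat.exists_eq_succ_of_ne_zero hl
  have := Fact.mk hp
  have hper : Function.Periodic (binSeq p (l + 1) s) (p ^ (l + k + 1)) :=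
    add_right_comm l 1 k ▸ periodic_binSeq hp hs'
  rw [perSeq_eq_minimalPeriod ⟨_, pow_pos hp.pos _, hper⟩, Nat.succ_add]
  exact Function.minimalPeriod_eq_prime_pow
    (isPeriodicPt_shiftSeq_iff.not.2 (not_periodic_binSeq hp hs))
    (isPeriodicPt_shiftSeq_iff.2 hper)

theorem pow_dvd_choose_of_dig_ne (hp : p.Prime) (hl : l ≠ 0)
    (hs : ∀ j ∈ Set.Ico t (t + l), dig p s j = p - 1) (hn : dig p n t ≠ p - 1) :
    p ^ l ∣ n.choose s := by
  have hborrow : t + 1 ∈ borrows p n s := by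
    rw [succ_mem_borrows_iff hp.pos, hs t ⟨le_rfl, by omega⟩]
    exact Or.inl ((dig_le_pred hp.pos n t).lt_of_ne hn)
  have hI : ↑(Finset.Icc (t + 1) (t + l)) ⊆ borrows p n s := by
    rw [Finset.coe_Icc]
    exact Icc_subset_borrows hp.pos hborrow fun j hj => hs j ⟨Nat.le_of_succ_le hj.1, hj.2⟩
  simpa using pow_card_dvd_choose hp hI

theorem nuVal_choose_deleteDigit (hp : p.Prime) (hns : dig p n t = dig p s t)
    (hs : ∀ j ∈ Set.Ico t (t + l), dig p s j = p - 1) :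
    nuVal p (n.choose s : ZMod (p ^ l)) =
      nuVal p ((deleteDigit p t n).choose (deleteDigit p t s) : ZMod (p ^ l)) := by
  have hpre := borrows_deleteDigit hp.pos hns
  by_cases ht : t ∈ borrows p n s
  · have hIcc := Icc_subset_borrows hp.pos ht hs
    have hI : ↑(Finset.Ico t (t + l)) ⊆ borrows p n s := by
      rw [Finset.coe_Ico]
      exact Set.Ico_subset_Icc_self.trans hIcc
    have hI' : ↑(Finset.Ico t (t + l)) ⊆ borrows p (deleteDigit p t n) (deleteDigit p t s) := by
      intro j hj
      obtain ⟨htj, hjl⟩ := Finset.mem_Ico.1 (Finset.mem_coe.1 hj)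
      rw [hpre, Set.mem_preimage, if_neg (not_lt.2 htj)]
      exact hIcc ⟨by omega, hjl⟩
    have hdvd := pow_card_dvd_choose hp hI
    have hdvd' := pow_card_dvd_choose hp hI'
    rw [Nat.card_Ico, Nat.add_sub_cancel_left] at hdvd hdvd'
    rw [nuVal_natCast hp, nuVal_natCast hp, if_pos hdvd, if_pos hdvd']
  · refine nuVal_natCast_congr hp ?_
    rw [emultiplicity_choose_eq_encard_borrows hp, emultiplicity_choose_eq_encard_borrows hp, hpre]
    refine (Set.encard_preimage_of_injective_subset_range (fun i j hij => ?_) fun i hi => ?_).symm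
    · grind
    · have hit : i ≠ t := fun h => ht (h ▸ hi)
      exact ⟨if i < t then i else i - 1, by grind⟩

end BinomialSequence

section Alternation

variable {M p q t N n : ℕ} {f g : ℕ → ZMod M}

theorem altSeq_of_dig_eq (h : dig q n t = q - 1) : AltSeq g q t n = g (deleteDigit q t n) :=
  if_pos h

theorem altSeq_of_dig_ne (h : dig q n t ≠ q - 1) : AltSeq g q t n = 0 :=
  if_neg h

theorem nuEquiv_binSeq_altSeq {l s : ℕ} (hp : p.Prime) (hl : l ≠ 0)
    (hs : ∀ j ∈ Set.Ico t (t + l), dig p s j = p - 1) :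
    nuEquiv p (binSeq p l s) (AltSeq (binSeq p l (deleteDigit p t s)) p t) := by
  refine nuEquiv_iff_nuVal_eq.2 fun n => ?_
  by_cases hn : dig p n t = p - 1
  · rw [altSeq_of_dig_eq hn]
    exact nuVal_choose_deleteDigit hp (hn.trans (hs t ⟨le_rfl, by omega⟩).symm) hs
  · have hzero : binSeq p l s n = 0 :=
      (ZMod.natCast_eq_zero_iff _ _).2 (pow_dvd_choose_of_dig_ne hp hl hs hn)
    rw [altSeq_of_dig_ne hn, hzero]

theorem card_filter_altSeq (hq : 0 < q) (ht : t ≤ N) {P : ZMod M → Prop} [DecidablePred P]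
    (hP : ¬ P 0) :
    ((Finset.range (q ^ (N + 1))).filter fun x => P (AltSeq g q t x)).card =
      ((Finset.range (q ^ N)).filter fun y => P (g y)).card := by
  have hlast : q - 1 < q := Nat.sub_lt hq one_pos
  have hdig {x : ℕ} (hx : P (AltSeq g q t x)) : dig q x t = q - 1 := by
    by_contra h
    exact hP (altSeq_of_dig_ne (g := g) h ▸ hx)
  refine Finset.card_bij' (fun x _ => deleteDigit q t x) (fun y _ => insertDigit q t (q - 1) y)
    (fun x hx => ?_) (fun y hy => ?_) (fun x hx => ?_) fun y _ => deleteDigit_insertDigit hlast y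
  · rw [Finset.mem_filter, Finset.mem_range] at hx ⊢
    exact ⟨(deleteDigit_lt_pow_iff hq ht).2 hx.1, altSeq_of_dig_eq (g := g) (hdig hx.2) ▸ hx.2⟩
  · rw [Finset.mem_filter, Finset.mem_range] at hy ⊢
    rw [← deleteDigit_lt_pow_iff hq ht, altSeq_of_dig_eq (dig_insertDigit hlast y),
      deleteDigit_insertDigit hlast]
    exact hy
  · rw [← hdig (Finset.mem_filter.1 hx).2]
    exact insertDigit_dig_deleteDigit hq x

theorem piCount_eq_of_nuEquiv_altSeq (h : nuEquiv p f (AltSeq g q t)) (hq : 0 < q) (ht : t ≤ N)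
    (hf : perSeq f = q ^ (N + 1)) (hg : perSeq g = q ^ N) (i : ℕ) :
    PiCount p i f = PiCount p i g := by
  have hzero : nuVal p (0 : ZMod M) ≠ i := by
    rw [nuVal_eq_top_iff.2 rfl]
    exact ENat.top_ne_natCast i
  simp only [PiCount, hf, hg, ← nuVal_eq_natCast_iff, nuEquiv_iff_nuVal_eq.1 h]
  exact card_filter_altSeq hq ht (P := fun a => nuVal p a = i) hzero

theorem zCount_add_card_filter_ne_zero (f : ℕ → ZMod M) :
    ZCount f + ((Finset.range (perSeq f)).filter fun x => f x ≠ 0).card = perSeq f := by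
  rw [ZCount, Finset.card_filter_add_card_filter_not, Finset.card_range]

theorem zCount_eq_of_nuEquiv_altSeq (h : nuEquiv p f (AltSeq g q t)) (hq : 0 < q) (ht : t ≤ N)
    (hf : perSeq f = q ^ (N + 1)) (hg : perSeq g = q ^ N) :
    ZCount f = ZCount g + (q - 1) * q ^ N := by
  have hne : ((Finset.range (perSeq f)).filter fun x => f x ≠ 0).card =
      ((Finset.range (perSeq g)).filter fun x => g x ≠ 0).card := by
    simp only [hf, hg, ne_eq, fun n => (h n).1]
    exact card_filter_altSeq hq ht (P := fun a => ¬ a = 0) (not_not.2 rfl)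
  have hZf := zCount_add_card_filter_ne_zero f
  have hZg := zCount_add_card_filter_ne_zero g
  have hpow : q ^ (N + 1) = (q - 1) * q ^ N + q ^ N := by
    rw [← Nat.succ_mul, Nat.succ_eq_add_one, Nat.sub_add_cancel hq, pow_succ']
  omega

end Alternation

theorem stmt17_general {p l k s t : ℕ} (hp : p.Prime) (hl : l ≠ 0) (ht : t < k)
    (hs1 : p ^ k ≤ s) (hs2 : s < p ^ (k + 1))
    (hdig : ∀ j ∈ Set.Ico t (t + l), dig p s j = p - 1) :
    nuEquiv p (binSeq p l s) (AltSeq (binSeq p l (deleteDigit p t s)) p t) ∧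
    (∀ i, PiCount p i (binSeq p l s) = PiCount p i (binSeq p l (deleteDigit p t s))) ∧
    ZCount (binSeq p l s) =
      ZCount (binSeq p l (deleteDigit p t s)) + (p - 1) * p ^ (k + l - 1) := by
  obtain ⟨k, rfl⟩ := Nat.exists_eq_succ_of_ne_zero (Nat.ne_zero_of_lt ht)
  have htk : t ≤ k := Nat.le_of_lt_succ ht
  have hlower : p ^ k ≤ deleteDigit p t s := by
    rw [← not_lt, deleteDigit_lt_pow_iff hp.pos htk]
    exact not_lt.2 hs1
  have hupper : deleteDigit p t s < p ^ (k + 1) :=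
    (deleteDigit_lt_pow_iff hp.pos ht.le).2 hs2
  have hperiod : perSeq (binSeq p l s) = p ^ (l + k + 1) := perSeq_binSeq hp hl hs1 hs2
  have hperiod' := perSeq_binSeq hp hl hlower hupper
  have hequiv := nuEquiv_binSeq_altSeq hp hl hdig
  have htN : t ≤ l + k := htk.trans (Nat.le_add_left k l)
  rw [show k + 1 + l - 1 = l + k by omega]
  exact ⟨hequiv, piCount_eq_of_nuEquiv_altSeq hequiv hp.pos htN hperiod hperiod',
    zCount_eq_of_nuEquiv_altSeq hequiv hp.pos htN hperiod hperiod'⟩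

/-- if the base-`p` digits of `s` in positions `k-m-1, …, k-m-ℓ` all equal
`p-1` and `s'` is obtained by deleting the digit in position `k-m-ℓ`, then
`bin_s ≡_ν Alt(bin_{s'}, p^{k-m-ℓ})`, `Π_i(bin_s) = Π_i(bin_{s'})` for all `i < ℓ`, and
`Z(bin_s) = Z(bin_{s'}) + (p-1)p^{k+ℓ-1}`. -/
theorem stmt17 (p l : ℕ) (hp : p.Prime) (hl : 1 ≤ l) (k m s : ℕ)
    (hkl : l < k) (hmk : m + l + 1 ≤ k)
    (hs1 : p ^ k ≤ s) (hs2 : s < p ^ (k + 1))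
    (hdig : ∀ j, k - m - l ≤ j → j + m + 1 ≤ k → dig p s j = p - 1)
    (s' : ℕ)
    (hs' : s' = (s / p ^ (k - m - l + 1)) * p ^ (k - m - l) + s % p ^ (k - m - l)) :
    nuEquiv p (binSeq p l s) (AltSeq (binSeq p l s') p (k - m - l)) ∧
    (∀ i < l, PiCount p i (binSeq p l s) = PiCount p i (binSeq p l s')) ∧
    ZCount (binSeq p l s) = ZCount (binSeq p l s') + (p - 1) * p ^ (k + l - 1) := by
  subst hs'
  obtain ⟨hequiv, hpi, hz⟩ := stmt17_general hp (Nat.ne_of_gt hl) (t := k - m - l) (by omega)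
    hs1 hs2 fun j ⟨hj, hj'⟩ => hdig j hj (by omega)
  exact ⟨hequiv, fun i _ => hpi i, hz⟩
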